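/- At optimality the residual energies on the common unknown coefficients vanish together: Assume e_x > 0 and e_q > 0 in the compressed-distance program. Then every optimal pair (a, b) satisfies: ∑_{l∈P3} a_l² = 0 if and only if ∑_{l∈P3} b_l² = 0. In other words, it is not possible at optimality that exactly one of the two residual energies on P3 is zero. -/

import Mathlib

/-- Feasibility for the compressed-distance program. -/
def Feasible {ι : Type*} [DecidableEq ι] (P1 P2 P3 : Finset ι) (A B eX eQ : ℝ)
    (a b : ι → ℝ) : Prop :=
  (∀ l ∈ P1 ∪ P3, 0 ≤ a l ∧ a l ≤ A) ∧
  (∀ l ∈ P2 ∪ P3, 0 ≤ b l ∧ b l ≤ B) ∧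
  (∑ l ∈ P1 ∪ P3, (a l) ^ 2) ≤ eX ∧
  (∑ l ∈ P2 ∪ P3, (b l) ^ 2) ≤ eQ

/-- Objective of the compressed-distance program. -/
def Obj {ι : Type*} (P1 P2 P3 : Finset ι) (bbar abar : ι → ℝ) (a b : ι → ℝ) : ℝ :=
  -∑ l ∈ P1, a l * bbar l - ∑ l ∈ P2, abar l * b l - ∑ l ∈ P3, a l * b l

/-!
For fixed `b`, the program is linear in `a` over a box intersected with a ball. If `a m = 0`, then
replacing `a` by `(1 - t² / eX) • a + t • eₘ` keeps it feasible for small `t > 0`, costs `O(t²)` and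
gains `t` times the coefficient of `a m`, so that coefficient cannot be positive. For `m ∈ P3` the
coefficient is `b m`. Hence, by the symmetry between `a` and `b`, an optimal pair has a common
support in `P3`.
-/

section SingleCoordinate

variable {ι R : Type*} [DecidableEq ι] [CommSemiring R] {S : Finset ι} {m : ι}

theorem sum_sq_smul_add_single {x : ι → R} (hm : m ∈ S) (hxm : x m = 0) (r t : R) :
    ∑ l ∈ S, (r • x + Pi.single m t : ι → R) l ^ 2 = r ^ 2 * ∑ l ∈ S, x l ^ 2 + t ^ 2 := by
  have hsq : ∀ l, (r • x + Pi.single m t : ι → R) l ^ 2 =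
      r ^ 2 * x l ^ 2 + (Pi.single m (t ^ 2) : ι → R) l := by
    intro l
    obtain rfl | hl := eq_or_ne l m
    · simp [hxm]
    · simp [hl, mul_pow]
  simp [hsq, Finset.sum_add_distrib, ← Finset.mul_sum, Pi.single_apply, hm, -Pi.add_apply]

theorem sum_mul_smul_add_single (hm : m ∈ S) (c x : ι → R) (r t : R) :
    ∑ l ∈ S, c l * (r • x + Pi.single m t : ι → R) l = r * ∑ l ∈ S, c l * x l + c m * t := by
  simp only [Pi.add_apply, Pi.smul_apply, smul_eq_mul, mul_add, Finset.sum_add_distrib,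
    mul_left_comm _ r, ← Finset.mul_sum]
  simp [Pi.single_apply, hm]

end SingleCoordinate

section CappedBall

variable {ι : Type*} {S : Finset ι} {u x : ι → ℝ} {e : ℝ} {m : ι}

/-- The box `0 ≤ x ≤ u` intersected with the ball `∑ x² ≤ e`: the constraints on a single vector of
the compressed-distance program. Only the coordinates in `S` are constrained. -/
def cappedBall (S : Finset ι) (u : ι → ℝ) (e : ℝ) : Set (ι → ℝ) :=
  {x | (∀ l ∈ S, 0 ≤ x l ∧ x l ≤ u l) ∧ ∑ l ∈ S, x l ^ 2 ≤ e}

theorem smul_add_single_mem_cappedBall [DecidableEq ι] (hx : x ∈ cappedBall S u e) (hm : m ∈ S)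
    (hxm : x m = 0) {θ t : ℝ} (hθ₀ : 0 ≤ θ) (hθ₁ : θ ≤ 1) (ht₀ : 0 ≤ t) (htu : t ≤ u m)
    (hte : t ^ 2 ≤ θ * e) :
    (1 - θ) • x + Pi.single m t ∈ cappedBall S u e := by
  obtain ⟨hbox, henergy⟩ := hx
  have hr₀ : 0 ≤ 1 - θ := sub_nonneg.2 hθ₁
  have hr₁ : 1 - θ ≤ 1 := sub_le_self 1 hθ₀
  refine ⟨fun l hl => ?_, ?_⟩
  · obtain rfl | hlm := eq_or_ne l m
    · simpa [hxm] using And.intro ht₀ htu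
    · obtain ⟨hl₀, hlu⟩ := hbox l hl
      simpa [hlm] using
        And.intro (mul_nonneg hr₀ hl₀) ((mul_le_of_le_one_left hl₀ hr₁).trans hlu)
  · calc ∑ l ∈ S, ((1 - θ) • x + Pi.single m t : ι → ℝ) l ^ 2
        = (1 - θ) ^ 2 * ∑ l ∈ S, x l ^ 2 + t ^ 2 := sum_sq_smul_add_single hm hxm _ _
      _ ≤ (1 - θ) * e + θ * e := by
        gcongr
        exact pow_le_of_le_one hr₀ hr₁ two_ne_zero
      _ = e := by ring

open Filter Topology in
theorem coeff_nonpos_of_isMaxOn_cappedBall {c : ι → ℝ} (he : 0 < e) (hx : x ∈ cappedBall S u e)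
    (hmax : IsMaxOn (fun y => ∑ l ∈ S, c l * y l) (cappedBall S u e) x)
    (hm : m ∈ S) (hum : 0 < u m) (hxm : x m = 0) : c m ≤ 0 := by
  classical
  set C := ∑ l ∈ S, c l * x l
  have hbound : ∀ᶠ t in 𝓝[>] (0 : ℝ), c m ≤ t * (C / e) := by
    filter_upwards [Ioo_mem_nhdsGT (lt_min hum (Real.sqrt_pos.2 he))] with t ⟨ht₀, ht⟩
    obtain ⟨htu, hte⟩ := lt_min_iff.1 ht
    have hte : t ^ 2 ≤ e := ((Real.lt_sqrt ht₀.le).1 hte).le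
    have hmem : (1 - t ^ 2 / e) • x + Pi.single m t ∈ cappedBall S u e :=
      smul_add_single_mem_cappedBall hx hm hxm (by positivity) ((div_le_one he).2 hte) ht₀.le
        htu.le (div_mul_cancel₀ _ he.ne').ge
    have hle : (1 - t ^ 2 / e) * C + c m * t ≤ C := by
      simpa only [sum_mul_smul_add_single hm] using isMaxOn_iff.1 hmax _ hmem
    refine le_of_mul_le_mul_left ?_ ht₀
    linear_combination hle
  have hlim : Tendsto (fun t : ℝ => t * (C / e)) (𝓝[>] 0) (𝓝 0) :=
    ((continuous_mul_const (C / e)).tendsto' 0 0 (zero_mul _)).mono_left nhdsWithin_le_nhds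
  exact ge_of_tendsto hlim hbound

end CappedBall

section Program

variable {ι : Type*} {P1 P2 P3 : Finset ι} {A B eX eQ : ℝ}
  {bbar abar a b : ι → ℝ}

theorem obj_swap : Obj P2 P1 P3 abar bbar b a = Obj P1 P2 P3 bbar abar a b := by
  simp only [Obj, mul_comm (b _), mul_comm (bbar _)]
  ring

variable [DecidableEq ι]

theorem feasible_iff_mem_cappedBall :
    Feasible P1 P2 P3 A B eX eQ a b ↔
      a ∈ cappedBall (P1 ∪ P3) (fun _ => A) eX ∧ b ∈ cappedBall (P2 ∪ P3) (fun _ => B) eQ := by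
  simp only [Feasible, cappedBall, Set.mem_ofPred_eq]
  tauto

theorem feasible_swap :
    Feasible P2 P1 P3 B A eQ eX b a ↔ Feasible P1 P2 P3 A B eX eQ a b := by
  rw [feasible_iff_mem_cappedBall, feasible_iff_mem_cappedBall, and_comm]

theorem obj_eq_neg_sum_piecewise (h13 : Disjoint P1 P3) :
    Obj P1 P2 P3 bbar abar a b =
      -∑ l ∈ P1 ∪ P3, P1.piecewise bbar b l * a l - ∑ l ∈ P2, abar l * b l := by
  have h1 : ∑ l ∈ P1, P1.piecewise bbar b l * a l = ∑ l ∈ P1, a l * bbar l :=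
    Finset.sum_congr rfl fun l hl => by rw [Finset.piecewise_eq_of_mem _ _ _ hl, mul_comm]
  have h3 : ∑ l ∈ P3, P1.piecewise bbar b l * a l = ∑ l ∈ P3, a l * b l :=
    Finset.sum_congr rfl fun l hl => by
      rw [Finset.piecewise_eq_of_notMem _ _ _ (Finset.disjoint_right.1 h13 hl), mul_comm]
  rw [Obj, Finset.sum_union h13, h1, h3]
  ring

theorem right_eq_zero_of_left_optimal (h13 : Disjoint P1 P3) (hA : 0 < A) (heX : 0 < eX)
    (hfeas : Feasible P1 P2 P3 A B eX eQ a b)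
    (hopt : ∀ a', Feasible P1 P2 P3 A B eX eQ a' b →
      Obj P1 P2 P3 bbar abar a b ≤ Obj P1 P2 P3 bbar abar a' b)
    {m : ι} (hm : m ∈ P3) (ham : a m = 0) : b m = 0 := by
  obtain ⟨ha, hb⟩ := feasible_iff_mem_cappedBall.1 hfeas
  have hmax : IsMaxOn (fun y => ∑ l ∈ P1 ∪ P3, P1.piecewise bbar b l * y l)
      (cappedBall (P1 ∪ P3) (fun _ => A) eX) a := by
    refine isMaxOn_iff.2 fun a' ha' => ?_
    have hle := hopt a' (feasible_iff_mem_cappedBall.2 ⟨ha', hb⟩)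
    rw [obj_eq_neg_sum_piecewise h13, obj_eq_neg_sum_piecewise h13] at hle
    linarith
  have hcoeff : P1.piecewise bbar b m ≤ 0 :=
    coeff_nonpos_of_isMaxOn_cappedBall heX ha hmax (Finset.mem_union_right _ hm) hA ham
  rw [Finset.piecewise_eq_of_notMem _ _ _ (Finset.disjoint_right.1 h13 hm)] at hcoeff
  exact hcoeff.antisymm (hb.1 m (Finset.mem_union_right _ hm)).1

theorem residual_energies_vanish_together_general
    (h13 : Disjoint P1 P3) (h23 : Disjoint P2 P3)
    (hA : 0 < A) (hB : 0 < B) (heX : 0 < eX) (heQ : 0 < eQ)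
    (hfeas : Feasible P1 P2 P3 A B eX eQ a b)
    (hopt_left : ∀ a', Feasible P1 P2 P3 A B eX eQ a' b →
      Obj P1 P2 P3 bbar abar a b ≤ Obj P1 P2 P3 bbar abar a' b)
    (hopt_right : ∀ b', Feasible P1 P2 P3 A B eX eQ a b' →
      Obj P1 P2 P3 bbar abar a b ≤ Obj P1 P2 P3 bbar abar a b') :
    ∀ l ∈ P3, a l = 0 ↔ b l = 0 := by
  have hopt_swap : ∀ b', Feasible P2 P1 P3 B A eQ eX b' a →
      Obj P2 P1 P3 abar bbar b a ≤ Obj P2 P1 P3 abar bbar b' a := by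
    simpa only [feasible_swap, obj_swap (P1 := P1) (P2 := P2)] using hopt_right
  exact fun l hl => ⟨right_eq_zero_of_left_optimal h13 hA heX hfeas hopt_left hl,
    right_eq_zero_of_left_optimal h23 hB heQ (feasible_swap.2 hfeas) hopt_swap hl⟩

end Program

/-- At optimality, the residual energies on the common unknown coefficients vanish
together: it is impossible that exactly one of `∑_{l∈P3} a l ^ 2`, `∑_{l∈P3} b l ^ 2`
is zero. -/
theorem residual_energies_vanish_together {ι : Type*} [DecidableEq ι]
    (P1 P2 P3 : Finset ι)
    (h12 : Disjoint P1 P2) (h13 : Disjoint P1 P3) (h23 : Disjoint P2 P3)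
    (A B eX eQ : ℝ) (hA : 0 < A) (hB : 0 < B) (heX : 0 < eX) (heQ : 0 < eQ)
    (bbar abar : ι → ℝ)
    (hbbar : ∀ l ∈ P1, B ≤ bbar l) (habar : ∀ l ∈ P2, A ≤ abar l)
    (a b : ι → ℝ)
    (hfeas : Feasible P1 P2 P3 A B eX eQ a b)
    (hopt : ∀ a' b' : ι → ℝ, Feasible P1 P2 P3 A B eX eQ a' b' →
      Obj P1 P2 P3 bbar abar a b ≤ Obj P1 P2 P3 bbar abar a' b') :
    (∑ l ∈ P3, (a l) ^ 2) = 0 ↔ (∑ l ∈ P3, (b l) ^ 2) = 0 := by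
  simp only [Finset.sum_eq_zero_iff_of_nonneg fun _ _ => sq_nonneg _, sq_eq_zero_iff]
  exact forall₂_congr <| residual_energies_vanish_together_general h13 h23 hA hB heX heQ hfeas
    (fun a' => hopt a' b) (fun b' => hopt a b')
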